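/- (Convergence of inexact accelerated gradient descent.) Let f : R^n → R be differentiable, L-smooth and σ-strongly convex with 0 < σ ≤ L, and let x* be its minimizer. Set τ = 2/(1 + √(8L/σ + 1)) and η = 1/(τL), so that 1 + ησ/2 = 1/(1−τ). Fix ε̃ ≥ 0, a starting point x₀ ∈ R^n, and sequences defined by y₀ = z₀ = x₀ and, for k = 0, 1, …, T−1: x_{k+1} = τ z_k + (1−τ) y_k; g_k ∈ R^n with ‖g_k − ∇f(x_{k+1})‖ ≤ ε̃; y_{k+1} = x_{k+1} − (1/L) g_k; z_{k+1} = (1/(1+ησ))(z_k + ησ x_{k+1} − η g_k). Then f(y_T) − f(x*) ≤ (1−τ)^T ( f(x₀) − f(x*) + (τ/(2η)) ‖x₀ − x*‖² ) + ε̃² (1/σ + η/2). -/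

import Mathlib

open RealInnerProductSpace

/-!
The proof is a potential argument. Write `u = xstar`, `a = τ / (2 η)`, `e k = g k - ∇f (x (k+1))`,
`N = εt² (1/σ + η/2)`, and
`Φ k = f (y k) - f u + a / (1 - τ) * ‖z k - u‖²`.
The choice of `τ` gives `σ (1 - τ) = 2 τ² L`, i.e. `1 + η σ / 2 = 1 / (1 - τ)`.

* `agd_step`: one iteration gives
  `f (y (k+1)) - f u + a / (1 - τ) * ‖z (k+1) - u‖² ≤ (1 - τ) (f (y k) - f u) + a ‖z k - u‖² + τ N`,
  whose right-hand side is `(1 - τ) Φ k + τ N`. The error enters as `τ ⟪e, u - z (k+1)⟫`, and Young's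
  inequality pays for it with half of the extra contraction that strong convexity provides.
* `agd_first`: `Φ` carries the weight `a / (1 - τ)` on the squared distance, whereas the claimed bound
  starts from the smaller weight `a`. The first iteration, in which `x 1 = y 0 = z 0`, makes up for the
  difference if it is allowed the whole error budget `N` in place of `τ N`:
  `Φ 1 ≤ (1 - τ) (f (x 0) - f u + a ‖x 0 - u‖²) + N`.
  `agd_step` is too weak for this. One needs the co-coercive form of smoothness
  between `x 0` and `y 1`, and strong convexity between each of these points and `u`. The bound is a
  nonnegative combination of these inequalities plus a positive semidefinite quadratic form in
  `x 0 - u`, `∇f (x 0)`, `∇f (y 1)` and `e 0` (`agd_psd`, `agd_coef`).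

Since `(1 - τ) N + τ N = N`, induction gives `Φ k ≤ (1 - τ)^k (…) + N` for all `1 ≤ k ≤ T`.
-/

/-! ### Quadratic forms in Gram products -/

section Algebra

variable {E : Type*} [NormedAddCommGroup E] [InnerProductSpace ℝ E]

/-- Completing the square in `e`: eliminates one vector from a quadratic form, with `B` an upper bound for
the reciprocal of the pivot `A`. -/
theorem agd_elim {A B : ℝ} (hB : 0 < B) (hAB : 1 ≤ A * B) (e w : E) :
    -(B * ‖w‖ ^ 2) ≤ A * ‖e‖ ^ 2 + 2 * ⟪e, w⟫ := by
  have h1 : 0 ≤ ‖e + B • w‖ ^ 2 := sq_nonneg _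
  rw [norm_add_sq_real, norm_smul, inner_smul_right, mul_pow, Real.norm_eq_abs, sq_abs] at h1
  have h2 : 0 ≤ (A * B - 1) * ‖e‖ ^ 2 := mul_nonneg (by linarith) (sq_nonneg _)
  have h3 : 0 ≤ B * (A * ‖e‖ ^ 2 + 2 * ⟪e, w⟫ + B * ‖w‖ ^ 2) := by nlinarith
  have := nonneg_of_mul_nonneg_right h3 hB
  linarith

/-- A criterion for positivity of a quadratic form in four vectors (with `⟪g, e⟫`-coefficient normalised to
`2`): eliminate `e`, then `g`, and bound the remaining form in `P` and `G` by Cauchy–Schwarz, using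
`4 * (13/2) ≥ 5²`. -/
theorem agd_psd {t pp gg GG ee pg pG pe gG Ge B C : ℝ} (ht : 0 < t)
    (hB : 0 < B) (hC : 0 < C) (hee : 1 ≤ ee * B) (hgg : 1 ≤ (gg - B) * C)
    (hpp : 13 / 2 * t ^ 3 ≤ pp - B * pe ^ 2 - C * (pg - B * pe) ^ 2)
    (hGG : t ≤ GG - B * Ge ^ 2 - C * (gG - B * Ge) ^ 2)
    (hpG : |pG - B * pe * Ge - C * (pg - B * pe) * (gG - B * Ge)| ≤ 5 / 2 * t ^ 2)
    (P g G e : E) :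
    0 ≤ pp * ‖P‖ ^ 2 + gg * ‖g‖ ^ 2 + GG * ‖G‖ ^ 2 + ee * ‖e‖ ^ 2
      + 2 * pg * ⟪P, g⟫ + 2 * pG * ⟪P, G⟫ + 2 * pe * ⟪P, e⟫ + 2 * gG * ⟪g, G⟫
      + 2 * ⟪g, e⟫ + 2 * Ge * ⟪G, e⟫ := by
  have h1 := agd_elim hB hee e (pe • P + g + Ge • G)
  have h2 := agd_elim hC hgg g ((pg - B * pe) • P + (gG - B * Ge) • G)
  set b := pG - B * pe * Ge - C * (pg - B * pe) * (gG - B * Ge) with hb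
  have h3 : |b * ⟪P, G⟫| ≤ 5 / 2 * t ^ 2 * (‖P‖ * ‖G‖) := by
    rw [abs_mul]
    exact mul_le_mul hpG (abs_real_inner_le_norm P G) (abs_nonneg _) (by positivity)
  have h4 := (abs_le.mp h3).1
  have h5 := mul_le_mul_of_nonneg_right hpp (sq_nonneg ‖P‖)
  have h6 := mul_le_mul_of_nonneg_right hGG (sq_nonneg ‖G‖)
  have h7 : 0 ≤ t * (5 / 2 * t * ‖P‖ - ‖G‖) ^ 2 := by positivity
  have h8 : 0 ≤ t ^ 3 * ‖P‖ ^ 2 := by positivity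
  simp only [← real_inner_self_eq_norm_sq, inner_add_left, inner_add_right, real_inner_smul_left,
    real_inner_smul_right] at h1 h2 h5 h6 h7 h8 ⊢
  rw [real_inner_comm g P, real_inner_comm G P, real_inner_comm g G] at *
  rw [real_inner_comm P e, real_inner_comm g e, real_inner_comm G e] at h1
  simp only [real_inner_self_eq_norm_sq] at *
  nlinarith

/-- The coefficients of the quadratic form in `agd_first` satisfy the hypotheses of `agd_psd`. With
`t = 1 / (2 + s)`, `s ≥ 0`, each inequality becomes, after clearing denominators, the nonnegativity of
a polynomial in `s` with nonnegative coefficients. -/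
theorem agd_coef {t : ℝ} (ht : 0 < t) (ht2 : t ≤ 1 / 2) {B C pe pg gG Ge pG : ℝ}
    (hB : B = t ^ 2 * (1 + t / 2)) (hC : C = 1 + 6 * t ^ 2)
    (hpe : pe = 1 / (1 + t) - 4 * t ^ 3) (hpg : pg = -(2 * t * (1 - t)))
    (hgG : gG = 2 * t ^ 2 * (1 - t)) (hGe : Ge = 4 * t ^ 4 - (1 - t) / (1 + t) ^ 2)
    (hpG : pG = -(t ^ 2 + 6 * t ^ 3 + 4 * t ^ 4) / (1 + t)) :
    1 ≤ (1 / t ^ 2 + Ge) * B ∧ 1 ≤ (1 - 2 * t ^ 2 * (1 - t) - B) * C ∧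
    13 / 2 * t ^ 3 ≤ 5 * t ^ 2 / (1 - t) - B * pe ^ 2 - C * (pg - B * pe) ^ 2 ∧
    t ≤ (1 - 2 * t ^ 2 * (1 - t) + Ge) - B * Ge ^ 2 - C * (gG - B * Ge) ^ 2 ∧
    |pG - B * pe * Ge - C * (pg - B * pe) * (gG - B * Ge)| ≤ 5 / 2 * t ^ 2 := by
  obtain ⟨s, hs, rfl⟩ : ∃ s : ℝ, 0 ≤ s ∧ t = 1 / (2 + s) := by
    refine ⟨1 / t - 2, ?_, by field_simp; ring⟩
    rw [le_div_iff₀ (by norm_num)] at ht2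
    rw [sub_nonneg, le_div_iff₀ ht]; linarith
  have e1 : 1 - 1 / (2 + s) = (1 + s) / (2 + s) := by field_simp; ring
  have e2 : 1 + 1 / (2 + s) = (3 + s) / (2 + s) := by field_simp; ring
  rw [abs_le]
  simp only [e1, e2] at *
  subst hB hC hpe hpg hgG hGe hpG
  refine ⟨?_, ?_, ?_, ?_, ?_, ?_⟩ <;> rw [← sub_nonneg] <;> field_simp <;> ring_nf <;> positivity

/-- The first iteration, rescaled to `L = 1`. Here `p = x 0 - xstar`, `G` and `g` are the gradients at `x 0`
and `y 1`, `e` is the error, `D0` and `D1` are the optimality gaps at `x 0` and `y 1`, and `s` is `σ / L`;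
thus `y 1 - xstar = p - (G + e)`, and the vector on the left-hand side is `z 1 - xstar`. -/
theorem agd_first {t D0 D1 s : ℝ} (ht : 0 < t) (ht2 : t ≤ 1 / 2) (hs : s = 2 * t ^ 2 / (1 - t))
    (p G g e : E)
    (hA : D1 + ⟪g, G + e⟫ + 1 / 2 * ‖G - g‖ ^ 2 ≤ D0)
    (hB : D0 ≤ ⟪G, p⟫ - s / 2 * ‖p‖ ^ 2)
    (hB2 : s / 2 * ‖p‖ ^ 2 ≤ D0)
    (hC : D1 ≤ ⟪g, p - (G + e)⟫ - s / 2 * ‖p - (G + e)‖ ^ 2) :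
    D1 + t ^ 2 / (2 * (1 - t)) * ‖p - ((1 - t) / (t * (1 + t))) • (G + e)‖ ^ 2
      ≤ (1 - t) * (D0 + t ^ 2 / 2 * ‖p‖ ^ 2) + ‖e‖ ^ 2 / (2 * t ^ 2) := by
  obtain ⟨h1, h2, h3, h4, h5⟩ := agd_coef ht ht2 rfl rfl rfl rfl rfl rfl rfl
  have h := agd_psd ht (by positivity) (by positivity) h1 h2 h3 h4 h5 (t • p) g G e
  have h1t : 0 < 1 - t := by linarith
  have h1t' : 0 < 1 + t := by linarith
  subst hs
  simp only [← real_inner_self_eq_norm_sq, inner_add_left, inner_add_right, inner_sub_left,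
    inner_sub_right, real_inner_smul_left, real_inner_smul_right] at *
  simp only [real_inner_comm p g, real_inner_comm p G, real_inner_comm p e, real_inner_comm G g,
    real_inner_comm G e] at *
  have hc : 0 ≤ 1 - 2 * t ^ 2 * (1 - t) := by nlinarith
  have hA' := mul_le_mul_of_nonneg_left hA hc
  have hB' := mul_le_mul_of_nonneg_left hB
    (show 0 ≤ t + t ^ 2 - 2 * t ^ 2 * (1 - t) by nlinarith)
  have hC' := mul_le_mul_of_nonneg_left hC (show 0 ≤ 2 * t ^ 2 * (1 - t) by positivity)
  -- The multipliers of the four inequalities; they are admissible for every `t ≤ 1 / 2`.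
  linear_combination (norm := skip) (1 / 2) * h + hA' + hB' + t ^ 2 * hB2 + hC'
  apply le_of_eq
  field_simp
  ring

/-- One iteration, with the minimizer translated to the origin: `p`, `y`, `z` and `w` stand for `x (k+1)`,
`y k`, `z k` and `z (k+1)`, `G` for the gradient at `x (k+1)` and `e` for the error; `fy'`, `fy`, `fs`,
`fu` are the values of `f` at `y (k+1)`, `y k`, `x (k+1)` and the minimizer. -/
theorem agd_step {t η L s fy fy' fs fu : ℝ} (ht : 0 < t) (ht2 : t ≤ 1 / 2) (hη : 0 < η)
    (hL : t * L * η = 1) (hs : η * s * (1 - t) = 2 * t) (p y z w G e : E)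
    (hp : p = t • z + (1 - t) • y)
    (hw : (1 + η * s) • w = z + (η * s) • p - η • (G + e))
    (h1 : fy' ≤ fs - ⟪G, (1 / L) • (G + e)⟫ + L / 2 * ‖(1 / L) • (G + e)‖ ^ 2)
    (h2 : fs - ⟪G, p⟫ + s / 2 * ‖p‖ ^ 2 ≤ fu)
    (h3 : fs + ⟪G, y - p⟫ ≤ fy) :
    fy' - fu + t / (2 * η * (1 - t)) * ‖w‖ ^ 2
      ≤ (1 - t) * (fy - fu) + t / (2 * η) * ‖z‖ ^ 2 + ‖e‖ ^ 2 * (t / s + 1 / (2 * L)) := by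
  have h1t : 0 < 1 - t := by linarith
  have hs' : s = 2 * t / (η * (1 - t)) := by field_simp; linarith
  have hL' : L = 1 / (t * η) := by field_simp; linarith
  have hz : z = (1 + η * s) • w - (η * s) • p + η • (G + e) := by rw [hw]; abel
  have hy : (1 - t) * ⟪G, y - p⟫ = t * ⟪G, p - z⟫ := by
    have hyz : (1 - t) • (y - p) = t • (p - z) := by
      have : (1 - t) • y = p - t • z := by rw [hp]; abel
      rw [smul_sub, this]; module
    rw [← real_inner_smul_right, ← real_inner_smul_right, hyz]
  clear hp hw
  have hs0 : 0 < s := by rw [hs']; positivity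
  -- Young's inequality for the error term, and the two squares left over by the mirror step.
  have q1 : 0 ≤ t * s * ‖(1 / 2 : ℝ) • w + (1 / s) • e‖ ^ 2 := by positivity
  have q2 : 0 ≤ t / (2 * η) * ‖z - w - η • G‖ ^ 2 := by positivity
  have q3 : 0 ≤ t * s / 2 * ‖w - p‖ ^ 2 := by positivity
  have h3' := mul_le_mul_of_nonneg_left h3 h1t.le
  subst hz
  simp only [← real_inner_self_eq_norm_sq, inner_add_left, inner_add_right, inner_sub_left,
    inner_sub_right, real_inner_smul_left, real_inner_smul_right] at *
  simp only [real_inner_comm w G, real_inner_comm w e, real_inner_comm w p, real_inner_comm G e,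
    real_inner_comm G p, real_inner_comm e p] at *
  linear_combination (norm := skip) h1 + t * h2 + h3' + q1 + q2 + q3 - hy
  subst hs' hL'
  apply le_of_eq
  field_simp
  ring

end Algebra

/-! ### Smoothness, minimizers and the parameters -/

section Smooth

variable {F : Type*} [NormedAddCommGroup F] [InnerProductSpace ℝ F] [CompleteSpace F]

/-- The descent lemma: the difference of the two sides is monotone along the segment from `x` to `y`. -/
theorem agd_descent {f : F → ℝ} {L : ℝ} (hdiff : Differentiable ℝ f)
    (hsmooth : ∀ x y, ‖gradient f x - gradient f y‖ ≤ L * ‖x - y‖) (x y : F) :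
    f y ≤ f x + ⟪gradient f x, y - x⟫ + L / 2 * ‖y - x‖ ^ 2 := by
  set v := y - x with hv
  let h : ℝ → ℝ := fun t => f (x + t • v) - t * ⟪gradient f x, v⟫ - L / 2 * ‖v‖ ^ 2 * t ^ 2
  have hd : ∀ t : ℝ, HasDerivAt h
      (⟪gradient f (x + t • v), v⟫ - ⟪gradient f x, v⟫ - L * ‖v‖ ^ 2 * t) t := by
    intro t
    have hl : HasDerivAt (fun t : ℝ => x + t • v) v t := by
      simpa using ((hasDerivAt_id t).smul_const v).const_add x
    have h1 := (hdiff (x + t • v)).hasGradientAt.hasFDerivAt.comp_hasDerivAt t hl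
    have h2 := (h1.sub ((hasDerivAt_id t).mul_const ⟪gradient f x, v⟫)).sub
      (((hasDerivAt_id t).pow 2).const_mul (L / 2 * ‖v‖ ^ 2))
    refine (show HasDerivAt h _ t from h2).congr_deriv ?_
    simp only [InnerProductSpace.toDual_apply_apply, id]
    push_cast
    ring
  have hanti : AntitoneOn h (Set.Icc 0 1) := by
    refine antitoneOn_of_deriv_nonpos (convex_Icc 0 1)
      (fun t _ => (hd t).continuousAt.continuousWithinAt)
      (fun t _ => (hd t).differentiableAt.differentiableWithinAt) ?_
    intro t ht
    rw [interior_Icc] at ht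
    rw [(hd t).deriv, ← inner_sub_left]
    have h1 := real_inner_le_norm (gradient f (x + t • v) - gradient f x) v
    have h2 := hsmooth (x + t • v) x
    rw [add_sub_cancel_left, norm_smul, Real.norm_of_nonneg ht.1.le] at h2
    nlinarith [mul_le_mul_of_nonneg_right h2 (norm_nonneg v)]
  have := hanti (Set.left_mem_Icc.2 zero_le_one) (Set.right_mem_Icc.2 zero_le_one) zero_le_one
  simp only [h, one_smul, zero_smul, add_zero, hv, add_sub_cancel] at this
  linarith

/-- Co-coercivity: compare the quadratic upper bound at `x` and the linear lower bound at `y`, both evaluated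
at `x - (∇f x - ∇f y) / L`. -/
theorem agd_cocoercive {f : F → ℝ} {L : ℝ} (hL : 0 < L)
    (hdesc : ∀ x y, f y ≤ f x + ⟪gradient f x, y - x⟫ + L / 2 * ‖y - x‖ ^ 2)
    (hconv : ∀ x y, f x + ⟪gradient f x, y - x⟫ ≤ f y) (x y : F) :
    f y + ⟪gradient f y, x - y⟫ + 1 / (2 * L) * ‖gradient f x - gradient f y‖ ^ 2 ≤ f x := by
  set d := gradient f x - gradient f y with hd
  have h1 := hdesc x (x - (1 / L) • d)
  have h2 := hconv y (x - (1 / L) • d)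
  have h3 : ⟪gradient f x, d⟫ - ⟪gradient f y, d⟫ = ‖d‖ ^ 2 := by
    rw [← inner_sub_left, ← hd, real_inner_self_eq_norm_sq]
  have e1 : x - (1 / L) • d - x = -((1 / L) • d) := by abel
  have e2 : x - (1 / L) • d - y = (x - y) - (1 / L) • d := by abel
  rw [e1, norm_neg, norm_smul, inner_neg_right, real_inner_smul_right, mul_pow,
    Real.norm_of_nonneg (by positivity)] at h1
  rw [e2, inner_sub_right, real_inner_smul_right] at h2
  linear_combination (norm := skip) h1 + h2 - (1 / L) * h3
  apply le_of_eq
  field_simp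
  ring

theorem agd_grad_zero {f : F → ℝ} {u : F} (hu : ∀ y, f u ≤ f y) : gradient f u = 0 := by
  have : fderiv ℝ f u = 0 := IsLocalMin.fderiv_eq_zero (Filter.Eventually.of_forall hu)
  simp [gradient, this]

end Smooth

theorem agd_params {L σ τ η : ℝ} (hσ₀ : 0 < σ) (hσL : σ ≤ L)
    (hτ : τ = 2 / (1 + Real.sqrt (8 * L / σ + 1))) (hη : η = 1 / (τ * L)) :
    0 < τ ∧ τ ≤ 1 / 2 ∧ 0 < η ∧ τ * L * η = 1 ∧ σ * (1 - τ) = 2 * τ ^ 2 * L := by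
  have hL : 0 < L := hσ₀.trans_le hσL
  set r := Real.sqrt (8 * L / σ + 1) with hr
  have hr2 : r ^ 2 = 8 * L / σ + 1 := Real.sq_sqrt (by positivity)
  have hr3 : 3 ≤ r := by
    apply Real.le_sqrt_of_sq_le
    have : 8 ≤ 8 * L / σ := by rw [le_div_iff₀ hσ₀]; linarith
    linarith
  have hτ0 : 0 < τ := by rw [hτ]; positivity
  refine ⟨hτ0, ?_, by rw [hη]; positivity, by rw [hη]; field_simp, ?_⟩
  · rw [hτ, div_le_div_iff₀ (by linarith) (by norm_num)]; linarith
  · have h8 : σ * (r ^ 2 - 1) = 8 * L := by rw [hr2]; field_simp; ring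
    have hr1 : 1 + r ≠ 0 := by positivity
    rw [hτ]
    field_simp
    linear_combination h8

/-- **convergence of inexact accelerated gradient descent.** -/
theorem inexact_agd_convergence {n : ℕ}
    (f : EuclideanSpace ℝ (Fin n) → ℝ) (L σ : ℝ) (hσ₀ : 0 < σ) (hσL : σ ≤ L)
    (hdiff : Differentiable ℝ f)
    (hsmooth : ∀ x y, ‖gradient f x - gradient f y‖ ≤ L * ‖x - y‖)
    (hsc : ∀ x y, f x + ⟪gradient f x, y - x⟫ + σ / 2 * ‖y - x‖ ^ 2 ≤ f y)
    (xstar : EuclideanSpace ℝ (Fin n)) (hstar : ∀ y, f xstar ≤ f y)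
    (τ η : ℝ)
    (hτ : τ = 2 / (1 + Real.sqrt (8 * L / σ + 1)))
    (hη : η = 1 / (τ * L))
    (εt : ℝ) (hεt : 0 ≤ εt)
    (T : ℕ)
    (x y z g : ℕ → EuclideanSpace ℝ (Fin n))
    (hy₀ : y 0 = x 0) (hz₀ : z 0 = x 0)
    (hx : ∀ k < T, x (k + 1) = τ • z k + (1 - τ) • y k)
    (hg : ∀ k < T, ‖g k - gradient f (x (k + 1))‖ ≤ εt)
    (hyk : ∀ k < T, y (k + 1) = x (k + 1) - (1 / L) • g k)
    (hzk : ∀ k < T, z (k + 1) = (1 / (1 + η * σ)) • (z k + (η * σ) • x (k + 1) - η • g k)) :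
    f (y T) - f xstar
      ≤ (1 - τ) ^ T * (f (x 0) - f xstar + τ / (2 * η) * ‖x 0 - xstar‖ ^ 2)
        + εt ^ 2 * (1 / σ + η / 2) := by
  have hL : 0 < L := hσ₀.trans_le hσL
  obtain ⟨hτ0, hτ2, hη0, hτLη, hστ⟩ := agd_params hσ₀ hσL hτ hη
  have h1τ : 0 < 1 - τ := by linarith
  have hηL : 1 / L = τ * η := by field_simp; linarith
  have hησ : η * σ * (1 - τ) = 2 * τ := by
    linear_combination η * hστ + 2 * τ * hτLη
  have hηpos : 0 < 1 + η * σ := by positivity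
  have hdesc := agd_descent hdiff hsmooth
  have hconv : ∀ x y, f x + ⟪gradient f x, y - x⟫ ≤ f y := fun x y => by
    have := hsc x y
    have : 0 ≤ σ / 2 * ‖y - x‖ ^ 2 := by positivity
    linarith
  set N := εt ^ 2 * (1 / σ + η / 2) with hN
  set Φ := f (x 0) - f xstar + τ / (2 * η) * ‖x 0 - xstar‖ ^ 2 with hΦ
  have hN0 : 0 ≤ N := by positivity
  have hτN : εt ^ 2 * (τ / σ + 1 / (2 * L)) = τ * N := by
    rw [hN, one_div, mul_inv, ← one_div L, hηL]; ring
  have hfirst : 0 < T → f (y 1) - f xstar + τ / (2 * η * (1 - τ)) * ‖z 1 - xstar‖ ^ 2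
      ≤ (1 - τ) * Φ + N := by
    intro hT
    have hx1 : x 1 = x 0 := by
      have := hx 0 hT
      rw [hy₀, hz₀, ← add_smul] at this
      simpa using this
    have hg0 := hg 0 hT
    have hy1 := hyk 0 hT
    have hz1 := hzk 0 hT
    simp only [zero_add, hx1, hz₀] at hg0 hy1 hz1
    set p := x 0 - xstar with hp
    set G := gradient f (x 0) with hG
    set e := g 0 - G with he
    have hge : g 0 = G + e := by rw [he]; abel
    set G1 := gradient f (y 1) with hG1
    have hyp : y 1 - xstar = p - ((1 / L) • G + (1 / L) • e) := by
      rw [hy1, hge, hp, smul_add]; abel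
    have hxy : x 0 - y 1 = (1 / L) • G + (1 / L) • e := by
      rw [hy1, hge, smul_add]; abel
    have hzp : z 1 - xstar
        = p - ((1 - τ) / (τ * (1 + τ))) • ((1 / L) • G + (1 / L) • e) := by
      have e1 : z 1 = x 0 - (η / (1 + η * σ)) • g 0 := by
        rw [hz1, add_sub_right_comm, smul_add, smul_sub, smul_smul, smul_smul]
        have : x 0 = (1 / (1 + η * σ)) • x 0 + (1 / (1 + η * σ) * (η * σ)) • x 0 := by
          rw [← add_smul, ← mul_one_add]; field_simp; simp
        conv_rhs => rw [this]
        rw [show η / (1 + η * σ) = 1 / (1 + η * σ) * η by ring]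
        abel
      have e2 : η / (1 + η * σ) = (1 - τ) / (τ * (1 + τ)) * (1 / L) := by
        have : η * σ = 2 * τ / (1 - τ) := by field_simp; linarith
        rw [this, hηL]; field_simp; ring
      rw [e1, e2, hge, hp, ← smul_add, smul_smul]; abel
    have cA := agd_cocoercive hL hdesc hconv (x 0) (y 1)
    have cB := hsc (x 0) xstar
    have cB2 := hsc xstar (x 0)
    have cC := hsc (y 1) xstar
    rw [agd_grad_zero hstar, inner_zero_left] at cB2
    rw [← hG, ← neg_sub (x 0), inner_neg_right, norm_neg, ← hp] at cB
    rw [← hG1, ← neg_sub (y 1), inner_neg_right, norm_neg, hyp] at cC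
    rw [hxy, ← hG, ← hG1] at cA
    have key := agd_first (t := τ) (D0 := (f (x 0) - f xstar) / L) (D1 := (f (y 1) - f xstar) / L)
      (s := σ / L) hτ0 hτ2 (by field_simp; linarith) p ((1 / L) • G) ((1 / L) • G1) ((1 / L) • e)
      (by
        rw [← smul_sub ((1 : ℝ) / L) G G1, norm_smul, Real.norm_of_nonneg (by positivity),
          real_inner_smul_left]
        linear_combination (norm := skip) mul_le_mul_of_nonneg_left cA (one_div_nonneg.2 hL.le)
        apply le_of_eq
        field_simp
        ring)
      (by
        rw [real_inner_smul_left]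
        linear_combination (norm := skip) mul_le_mul_of_nonneg_left cB (one_div_nonneg.2 hL.le)
        apply le_of_eq
        field_simp
        ring)
      (by
        linear_combination (norm := skip) mul_le_mul_of_nonneg_left cB2 (one_div_nonneg.2 hL.le)
        apply le_of_eq
        field_simp
        ring)
      (by
        rw [real_inner_smul_left]
        linear_combination (norm := skip) mul_le_mul_of_nonneg_left cC (one_div_nonneg.2 hL.le)
        apply le_of_eq
        field_simp
        ring)
    rw [← hzp, norm_smul, Real.norm_of_nonneg (by positivity)] at key
    have hee : ‖e‖ ^ 2 ≤ εt ^ 2 := pow_le_pow_left₀ (norm_nonneg _) hg0 2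
    have hNe : ‖e‖ ^ 2 * (1 / σ + η / 2) ≤ N :=
      mul_le_mul_of_nonneg_right hee (by positivity)
    have hηv : η = 1 / (τ * L) := hη
    have hσv : σ = 2 * τ ^ 2 * L / (1 - τ) := by field_simp; linarith
    have key' := mul_le_mul_of_nonneg_left key hL.le
    refine le_trans ?_ (add_le_add_right hNe _)
    rw [hΦ]
    linear_combination (norm := skip) key'
    rw [hσv, hηv]
    apply le_of_eq
    field_simp
    ring
  have hind : ∀ k, k + 1 ≤ T →
      f (y (k + 1)) - f xstar + τ / (2 * η * (1 - τ)) * ‖z (k + 1) - xstar‖ ^ 2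
        ≤ (1 - τ) ^ (k + 1) * Φ + N := by
    intro k
    induction k with
    | zero => intro hT; simpa using hfirst hT
    | succ k ih =>
      intro hT
      have hk : k + 1 < T := hT
      have ih' := ih hk.le
      set s := x (k + 1 + 1) with hs
      set G := gradient f s with hG
      set e := g (k + 1) - G with he
      have hge : g (k + 1) = G + e := by rw [he]; abel
      have hxs := hx _ hk
      have hys := hyk _ hk
      have hzs := hzk _ hk
      have hes := hg _ hk
      rw [← hs] at hxs hys hzs hes
      rw [hge] at hys hzs
      have d1 := hdesc s (y (k + 1 + 1))
      have d2 := hsc s xstar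
      have d3 := hconv s (y (k + 1))
      rw [hys, sub_sub_cancel_left, norm_neg, inner_neg_right, ← hys, ← hG] at d1
      rw [← hG, ← neg_sub s, inner_neg_right, norm_neg] at d2
      have key := agd_step (fy' := f (y (k + 1 + 1))) (fy := f (y (k + 1))) (fs := f s)
        (fu := f xstar) hτ0 hτ2 hη0 hτLη hησ (s - xstar) (y (k + 1) - xstar) (z (k + 1) - xstar)
        (z (k + 1 + 1) - xstar) G e
        (by rw [hxs]; module)
        (by
          rw [smul_sub, hzs, smul_smul, mul_one_div_cancel hηpos.ne']; module)
        (by linarith) (by linarith) (by rw [sub_sub_sub_cancel_right]; exact d3)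
      have hee : ‖e‖ ^ 2 * (τ / σ + 1 / (2 * L)) ≤ τ * N := by
        rw [← hτN]
        exact mul_le_mul_of_nonneg_right (pow_le_pow_left₀ (norm_nonneg _) hes 2) (by positivity)
      have hm := mul_le_mul_of_nonneg_left ih' h1τ.le
      have hw : (1 - τ) * (τ / (2 * η * (1 - τ)) * ‖z (k + 1) - xstar‖ ^ 2)
          = τ / (2 * η) * ‖z (k + 1) - xstar‖ ^ 2 := by field_simp
      rw [mul_add, hw] at hm
      have hp : (1 - τ) ^ (k + 1 + 1) * Φ + N
          = (1 - τ) * ((1 - τ) ^ (k + 1) * Φ + N) + τ * N := by ring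
      rw [hp]
      linarith
  rcases T with _ | k
  · have : 0 ≤ τ / (2 * η) * ‖x 0 - xstar‖ ^ 2 := by positivity
    rw [hy₀, pow_zero, one_mul]
    linarith
  · have := hind k le_rfl
    have : 0 ≤ τ / (2 * η * (1 - τ)) * ‖z (k + 1) - xstar‖ ^ 2 := by positivity
    linarith
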